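/- arXiv:1910.03036 — 3 statements merged into one kernel-verified Lean document; each statement's English description precedes it below -/
import Mathlib

section
/- For every a \in \mathbb{R} with a \notin -\mathbb{N}_0 and every complex w with Re(w) > 0, \operatorname{Log}(1/w) - \sum_{m \ge 0} \frac{e^{-w(m+a)}}{m+a} + C_a = \sum_{n \ge 0} \frac{B_{n+1}(a)\,(-w)^{n+1}}{(n+1)\,(n+1)!}, where the series on the right converges (for all sufficiently small |w|, and by analytic continuation equality holds for all Re(w) > 0 where both sides are defined). -/
open Filter Topology Set

noncomputable section

/-- The `n`-th Bernoulli polynomial, evaluated at a real number. -/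
def bernoulliPoly (n : ℕ) (x : ℝ) : ℝ :=
  Polynomial.eval x ((Polynomial.bernoulli n).map (algebraMap ℚ ℝ))

/-- The constant `C_a = (1-a) ∑_{m≥0} 1/((m+a)(m+1))`. -/
def Cconst (a : ℝ) : ℝ := (1 - a) * ∑' m : ℕ, 1 / (((m : ℝ) + a) * ((m : ℝ) + 1))

/-! On the part of the right half-plane inside the disc of convergence, both sides of the identity
are primitives of `e^{-as}/(1 - e^{-s}) - 1/s`. For the left side this is the geometric series: the
Lerch series `Φ(q) = ∑ q^m/(m+a)` solves `aΦ + qΦ' = 1/(1-q)`. For the right side it is the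
generating function of the Bernoulli polynomials. The two sides therefore differ by a constant,
which is evaluated as `s = x → 0⁺`: writing `1/(m+a) = (1-a)/((m+a)(m+1)) + 1/(m+1)` splits
`-log(1 - e^{-x}) ∼ -log x` off the Lerch series, and Abel's limit theorem identifies what remains
as `C_a`. A point `w` on the circle of convergence is reached by continuity, since the Bernoulli
series converges absolutely on `|s| ≤ |w|` as soon as it converges unconditionally at `w`. -/

section PowerSeries

theorem norm_mul_pow_le_of_mem_closedBall {R : Type*} [NormedDivisionRing R] (c : ℕ → R) {r : ℝ}
    {z : R} (hz : z ∈ Metric.closedBall 0 r) (n : ℕ) : ‖c n * z ^ n‖ ≤ ‖c n‖ * r ^ n := by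
  rw [norm_mul, norm_pow]
  gcongr
  exact mem_closedBall_zero_iff.mp hz

theorem continuousOn_tsum_mul_pow {R : Type*} [NormedDivisionRing R] [CompleteSpace R]
    {c : ℕ → R} {r : ℝ} (hc : Summable fun n ↦ ‖c n‖ * r ^ n) :
    ContinuousOn (fun z ↦ ∑' n, c n * z ^ n) (Metric.closedBall 0 r) :=
  continuousOn_tsum (fun n ↦ by fun_prop) hc fun n _ hz ↦ norm_mul_pow_le_of_mem_closedBall c hz n

theorem tsum_coeff_mul_mul_pow {R : Type*} [NormedCommRing R] [CompleteSpace R]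
    {f g : PowerSeries R} {z : R} (hf : Summable fun n ↦ ‖f.coeff n * z ^ n‖)
    (hg : Summable fun n ↦ ‖g.coeff n * z ^ n‖) :
    ∑' n, (f * g).coeff n * z ^ n = (∑' n, f.coeff n * z ^ n) * ∑' n, g.coeff n * z ^ n := by
  rw [tsum_mul_tsum_eq_tsum_sum_antidiagonal_of_summable_norm hf hg]
  refine tsum_congr fun n ↦ ?_
  rw [PowerSeries.coeff_mul, Finset.sum_mul]
  refine Finset.sum_congr rfl fun p hp ↦ ?_
  rw [← Finset.HasAntidiagonal.mem_antidiagonal.mp hp, pow_add]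
  ring

variable {c : ℕ → ℂ} {r : ℝ}

theorem differentiableAt_tsum_mul_pow (hc : Summable fun n ↦ ‖c n‖ * r ^ n) {z : ℂ}
    (hz : ‖z‖ < r) : DifferentiableAt ℂ (fun z : ℂ ↦ ∑' n, c n * z ^ n) z :=
  (Complex.differentiableOn_tsum_of_summable_norm hc (fun n ↦ by fun_prop) Metric.isOpen_ball
    fun n _ hy ↦ norm_mul_pow_le_of_mem_closedBall c (Metric.ball_subset_closedBall hy) n)
    |>.differentiableAt (Metric.isOpen_ball.mem_nhds (mem_ball_zero_iff.mpr hz))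

theorem hasSum_natCast_mul_mul_pow (hc : Summable fun n ↦ ‖c n‖ * r ^ n) {z : ℂ}
    (hz : ‖z‖ < r) :
    HasSum (fun n : ℕ ↦ n * c n * z ^ n) (z * deriv (fun z : ℂ ↦ ∑' n, c n * z ^ n) z) := by
  refine ((Complex.hasSum_deriv_of_summable_norm hc (fun n ↦ by fun_prop) Metric.isOpen_ball
    (fun n _ hy ↦ norm_mul_pow_le_of_mem_closedBall c (Metric.ball_subset_closedBall hy) n)
    (mem_ball_zero_iff.mpr hz)).mul_left z).congr_fun fun n ↦ ?_
  rcases n with _ | n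
  · simp
  · have hpow : deriv (fun z ↦ c (n + 1) * z ^ (n + 1)) z = c (n + 1) * ((n + 1 : ℕ) * z ^ n) := by
      simp
    rw [hpow, pow_succ]
    ring

theorem hasSum_coeff_exp_mul_pow (z : ℂ) :
    HasSum (fun n ↦ (PowerSeries.exp ℂ).coeff n * z ^ n) (Complex.exp z) := by
  rw [Complex.exp_eq_exp_ℂ]
  refine (NormedSpace.expSeries_div_hasSum_exp z).congr_fun fun n ↦ ?_
  simp [PowerSeries.coeff_exp, div_eq_inv_mul]

theorem hasSum_coeff_exp_sub_one_mul_pow (z : ℂ) :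
    HasSum (fun n ↦ (PowerSeries.exp ℂ - 1).coeff n * z ^ n) (Complex.exp z - 1) := by
  refine ((hasSum_coeff_exp_mul_pow z).sub (hasSum_ite_eq 0 1)).congr_fun fun n ↦ ?_
  rw [map_sub, PowerSeries.coeff_one, sub_mul]
  split_ifs with hn <;> simp [hn]

theorem hasSum_coeff_X_mul_rescale_exp_mul_pow (a z : ℂ) :
    HasSum (fun n ↦ (PowerSeries.X * PowerSeries.rescale a (PowerSeries.exp ℂ)).coeff n * z ^ n)
      (z * Complex.exp (a * z)) := by
  rw [← hasSum_nat_add_iff' 1]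
  simp only [Finset.sum_range_one, PowerSeries.coeff_zero_X_mul, zero_mul, sub_zero]
  refine ((hasSum_coeff_exp_mul_pow (a * z)).mul_left z).congr_fun fun n ↦ ?_
  rw [PowerSeries.coeff_succ_X_mul, PowerSeries.coeff_rescale]
  ring

end PowerSeries

section Lerch

/-- The Lerch transcendent `Φ(q, 1, a)`. -/
def lerchPhi (a q : ℂ) : ℂ := ∑' m : ℕ, ((m : ℂ) + a)⁻¹ * q ^ m

/-- The function `s ↦ ∑ e^{-s(m+a)}/(m+a)`, a primitive of `-e^{-as}/(1 - e^{-s})` on the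
right half-plane. -/
def lerchExp (a s : ℂ) : ℂ := ∑' m : ℕ, Complex.exp (-s * (m + a)) / (m + a)

/-- The constant `C_a` at a complex parameter; it equals `-ψ(a) - γ`, with `ψ` the digamma
function and `γ` Euler's constant. -/
def digammaConst (a : ℂ) : ℂ := (1 - a) * ∑' m : ℕ, 1 / (((m : ℂ) + a) * ((m : ℂ) + 1))

theorem ofReal_Cconst (a : ℝ) : (Cconst a : ℂ) = digammaConst a := by
  simp [Cconst, digammaConst, Complex.ofReal_tsum]

theorem norm_exp_neg_lt_one {s : ℂ} (hs : 0 < s.re) : ‖Complex.exp (-s)‖ < 1 := by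
  simpa [Complex.norm_exp] using hs

theorem one_sub_exp_neg_ne_zero {s : ℂ} (hs : 0 < s.re) : 1 - Complex.exp (-s) ≠ 0 := by
  intro h
  simpa [← sub_eq_zero.mp h] using norm_exp_neg_lt_one hs

theorem lerchExp_eq_exp_mul_lerchPhi (a s : ℂ) :
    lerchExp a s = Complex.exp (-a * s) * lerchPhi a (Complex.exp (-s)) := by
  rw [lerchExp, lerchPhi, ← tsum_mul_left]
  refine tsum_congr fun m ↦ ?_
  rw [show -s * (m + a) = -a * s + m * -s by ring, Complex.exp_add, Complex.exp_nat_mul]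
  ring

theorem summable_norm_inv_natCast_add_mul_pow (a : ℂ) {r : ℝ} (hr₀ : 0 ≤ r) (hr₁ : r < 1) :
    Summable fun m : ℕ ↦ ‖((m : ℂ) + a)⁻¹‖ * r ^ m := by
  have hinv : Tendsto (fun m : ℕ ↦ ((m : ℂ) + a)⁻¹) atTop (𝓝 0) := by
    simpa [add_comm] using EisensteinSeries.tendsto_zero_inv_linear a 1
  obtain ⟨K, hK⟩ := hinv.norm.bddAbove_range
  refine ((summable_geometric_of_lt_one hr₀ hr₁).mul_left K).of_nonneg_of_le
    (fun m ↦ by positivity) fun m ↦ ?_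
  gcongr
  exact hK ⟨m, rfl⟩

theorem summable_one_div_natCast_add_mul_natCast_add_one (a : ℂ) :
    Summable fun m : ℕ ↦ 1 / (((m : ℂ) + a) * ((m : ℂ) + 1)) := by
  have h := (EisensteinSeries.summable_linear_right_add_one_mul_linear_right a 0 1).comp_injective
    Nat.cast_injective
  refine h.congr fun m ↦ ?_
  simp [mul_comm, add_comm]

theorem differentiableAt_lerchPhi (a : ℂ) {q : ℂ} (hq : ‖q‖ < 1) :
    DifferentiableAt ℂ (lerchPhi a) q := by
  obtain ⟨r, hqr, hr₁⟩ := exists_between hq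
  exact differentiableAt_tsum_mul_pow
    (summable_norm_inv_natCast_add_mul_pow a ((norm_nonneg q).trans hqr.le) hr₁) hqr

variable {a : ℂ} (ha : ∀ k : ℕ, a ≠ -k)
include ha

theorem natCast_add_ne_zero (m : ℕ) : (m : ℂ) + a ≠ 0 :=
  fun h ↦ ha m (eq_neg_of_add_eq_zero_right h)

theorem mul_lerchPhi_add_mul_deriv_lerchPhi {q : ℂ} (hq : ‖q‖ < 1) :
    a * lerchPhi a q + q * deriv (lerchPhi a) q = (1 - q)⁻¹ := by
  obtain ⟨r, hqr, hr₁⟩ := exists_between hq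
  have hsum := summable_norm_inv_natCast_add_mul_pow a ((norm_nonneg q).trans hqr.le) hr₁
  have hphi : HasSum (fun m : ℕ ↦ ((m : ℂ) + a)⁻¹ * q ^ m) (lerchPhi a q) :=
    (hsum.of_norm_bounded fun m ↦ norm_mul_pow_le_of_mem_closedBall
      (fun m : ℕ ↦ ((m : ℂ) + a)⁻¹) (mem_closedBall_zero_iff.mpr hqr.le) m).hasSum
  refine ((hphi.mul_left a).add (hasSum_natCast_mul_mul_pow hsum hqr)).unique
    ((hasSum_geometric_of_norm_lt_one hq).congr_fun fun m ↦ ?_)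
  have := natCast_add_ne_zero ha m
  field_simp
  ring

theorem hasDerivAt_lerchExp {s : ℂ} (hs : 0 < s.re) :
    HasDerivAt (lerchExp a) (-(Complex.exp (-a * s) / (1 - Complex.exp (-s)))) s := by
  have hq := norm_exp_neg_lt_one hs
  have hphi := (differentiableAt_lerchPhi a hq).hasDerivAt.comp s (hasDerivAt_neg s).cexp
  have hexp := ((hasDerivAt_id s).const_mul (-a)).cexp
  rw [funext (lerchExp_eq_exp_mul_lerchPhi a)]
  refine (hexp.mul hphi).congr_deriv ?_
  rw [div_eq_mul_inv, ← mul_lerchPhi_add_mul_deriv_lerchPhi ha hq]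
  simp only [Function.comp_apply, id]
  ring

theorem lerchPhi_eq_tsum_sub_log {q : ℂ} (hq₀ : q ≠ 0) (hq : ‖q‖ < 1) :
    lerchPhi a q = (1 - a) * ∑' m : ℕ, 1 / (((m : ℂ) + a) * ((m : ℂ) + 1)) * q ^ m -
      q⁻¹ * Complex.log (1 - q) := by
  have hsum : Summable fun m : ℕ ↦ 1 / (((m : ℂ) + a) * ((m : ℂ) + 1)) * q ^ m := by
    refine (summable_one_div_natCast_add_mul_natCast_add_one a).norm.of_norm_bounded fun m ↦ ?_
    rw [norm_mul, norm_pow]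
    exact mul_le_of_le_one_right (norm_nonneg _) (pow_le_one₀ (norm_nonneg _) hq.le)
  rw [sub_eq_add_neg, ← mul_neg]
  refine HasSum.tsum_eq (((hsum.hasSum.mul_left (1 - a)).add
    ((Complex.hasSum_taylorSeries_neg_log' hq).mul_left q⁻¹)).congr_fun fun m ↦ ?_)
  have h₁ := natCast_add_ne_zero ha m
  have h₂ : (m : ℂ) + 1 ≠ 0 := Nat.cast_add_one_ne_zero m
  field_simp
  ring

end Lerch

section Asymptotics

theorem tendsto_exp_mul_sub_one_mul_log (b : ℂ) :
    Tendsto (fun x : ℝ ↦ (Complex.exp (b * x) - 1) * Real.log x) (𝓝[>] 0) (𝓝 0) := by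
  have hderiv : HasDerivAt (fun x : ℝ ↦ Complex.exp (b * x)) b 0 := by
    simpa using ((hasDerivAt_id (0 : ℂ)).const_mul b).cexp.comp_ofReal
  have hO : (fun x : ℝ ↦ Complex.exp (b * x) - 1) =O[𝓝[>] 0] fun x : ℝ ↦ x := by
    simpa using hderiv.isBigO_sub.mono nhdsWithin_le_nhds
  have hlog : (fun x : ℝ ↦ (Real.log x : ℂ)) =O[𝓝[>] 0] Real.log :=
    Asymptotics.isBigO_of_le _ fun x ↦ by simp
  refine (hO.mul hlog).trans_tendsto ?_
  simpa using (Real.continuous_mul_log.tendsto 0).mono_left nhdsWithin_le_nhds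

theorem tendsto_log_one_sub_exp_neg_sub_log :
    Tendsto (fun x : ℝ ↦ Real.log (1 - Real.exp (-x)) - Real.log x) (𝓝[>] 0) (𝓝 0) := by
  have hderiv : HasDerivAt (fun x : ℝ ↦ 1 - Real.exp (-x)) 1 0 := by
    simpa using (hasDerivAt_neg (0 : ℝ)).exp.const_sub 1
  have hslope : Tendsto (fun x : ℝ ↦ x⁻¹ * (1 - Real.exp (-x))) (𝓝[>] 0) (𝓝 1) := by
    simpa using hderiv.tendsto_slope_zero_right
  have hlog := hslope.log one_ne_zero
  rw [Real.log_one] at hlog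
  refine hlog.congr' ?_
  filter_upwards [self_mem_nhdsWithin] with x hx
  have hx' : 0 < x := hx
  have hne : 1 - Real.exp (-x) ≠ 0 :=
    (sub_pos.mpr (Real.exp_lt_one_iff.mpr (neg_lt_zero.mpr hx))).ne'
  rw [Real.log_mul (inv_ne_zero hx'.ne') hne, Real.log_inv]
  ring

theorem tendsto_exp_neg_nhdsLT_one : Tendsto (fun x : ℝ ↦ Real.exp (-x)) (𝓝[>] 0) (𝓝[<] 1) := by
  refine tendsto_nhdsWithin_iff.mpr ⟨?_, ?_⟩
  · have h : Continuous fun x : ℝ ↦ Real.exp (-x) := by fun_prop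
    simpa using (h.tendsto 0).mono_left nhdsWithin_le_nhds
  · filter_upwards [self_mem_nhdsWithin] with x hx
    exact Real.exp_lt_one_iff.mpr (neg_lt_zero.mpr hx)

theorem tendsto_tsum_mul_exp_neg_pow_digammaConst (a : ℂ) :
    Tendsto (fun x : ℝ ↦ (1 - a) * ∑' m : ℕ, 1 / (((m : ℂ) + a) * ((m : ℂ) + 1)) *
      Complex.exp (-x) ^ m) (𝓝[>] 0) (𝓝 (digammaConst a)) := by
  have habel := Complex.tendsto_tsum_powerSeries_nhdsWithin_lt
    (summable_one_div_natCast_add_mul_natCast_add_one a).hasSum.tendsto_sum_nat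
  have h := ((tendsto_map'_iff.mp habel).comp tendsto_exp_neg_nhdsLT_one).const_mul (1 - a)
  simpa [digammaConst, Function.comp_def] using h

theorem tendsto_lerchExp_add_log {a : ℂ} (ha : ∀ k : ℕ, a ≠ -k) :
    Tendsto (fun x : ℝ ↦ lerchExp a x + Real.log x) (𝓝[>] 0) (𝓝 (digammaConst a)) := by
  have hexp (b : ℂ) : Tendsto (fun x : ℝ ↦ Complex.exp (b * x)) (𝓝[>] 0) (𝓝 1) := by
    have h : Continuous fun x : ℝ ↦ Complex.exp (b * x) := by fun_prop
    simpa using (h.tendsto 0).mono_left nhdsWithin_le_nhds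
  have hlog := (Complex.continuous_ofReal.tendsto 0).comp tendsto_log_one_sub_exp_neg_sub_log
  have hlim := (((hexp (-a)).mul (tendsto_tsum_mul_exp_neg_pow_digammaConst a)).sub
    ((hexp (1 - a)).mul hlog)).sub (tendsto_exp_mul_sub_one_mul_log (1 - a))
  simp only [one_mul, Complex.ofReal_zero, sub_zero] at hlim
  refine hlim.congr' ?_
  filter_upwards [self_mem_nhdsWithin] with x hx
  have hx' : 0 < x := hx
  have hq : ‖Complex.exp (-x)‖ < 1 := norm_exp_neg_lt_one (by simpa using hx')
  have hlog_cast : Complex.log (1 - Complex.exp (-x)) = (Real.log (1 - Real.exp (-x)) : ℝ) := by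
    rw [Complex.ofReal_log (sub_nonneg.mpr (Real.exp_le_one_iff.mpr (neg_nonpos.mpr hx'.le)))]
    push_cast
    rfl
  have hexp_add : Complex.exp ((1 - a) * x) = Complex.exp (-a * x) * (Complex.exp (-x))⁻¹ := by
    rw [← Complex.exp_neg, ← Complex.exp_add]
    ring_nf
  rw [lerchExp_eq_exp_mul_lerchPhi, lerchPhi_eq_tsum_sub_log ha (Complex.exp_ne_zero _) hq,
    hlog_cast, hexp_add]
  simp only [Function.comp_apply, Complex.ofReal_sub]
  ring

end Asymptotics

section Bernoulli

/-- The coefficient `B_n(a)/n!` of `z^n` in the generating function `z e^{az}/(e^z - 1)`. -/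
def bernoulliCoeff (a : ℂ) (n : ℕ) : ℂ := Polynomial.aeval a (Polynomial.bernoulli n) / n.factorial

/-- The series `∑_{n≥1} B_n(a) z^n/(n n!)`, a primitive of `e^{az}/(e^z - 1) - 1/z`. The sum may
run over all `n`, because its term at `n = 0` is a division by zero, with value `0`. -/
def bernoulliLogSeries (a z : ℂ) : ℂ := ∑' n : ℕ, bernoulliCoeff a n / n * z ^ n

theorem ofReal_bernoulliPoly (n : ℕ) (x : ℝ) :
    (bernoulliPoly n x : ℂ) = Polynomial.aeval (x : ℂ) (Polynomial.bernoulli n) := by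
  rw [bernoulliPoly, Polynomial.eval_map_algebraMap, ← Complex.coe_algebraMap,
    Polynomial.aeval_algebraMap_apply]

variable {a : ℂ}

theorem bernoulliCoeff_zero : bernoulliCoeff a 0 = 1 := by
  simp [bernoulliCoeff]

theorem sum_bernoulliCoeff_div_factorial (a : ℂ) (n : ℕ) :
    ∑ k ∈ Finset.range (n + 1), bernoulliCoeff a k / (n + 1 - k).factorial =
      a ^ n / n.factorial := by
  have hsum := congrArg (Polynomial.aeval a) (Polynomial.sum_bernoulli n)
  simp only [map_sum, map_smul, Polynomial.aeval_monomial] at hsum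
  have hn : ((n + 1).factorial : ℂ) ≠ 0 := mod_cast (n + 1).factorial_ne_zero
  have hterm : ∀ k ∈ Finset.range (n + 1), bernoulliCoeff a k / (n + 1 - k).factorial =
      ((n + 1).choose k : ℚ) • Polynomial.aeval a (Polynomial.bernoulli k) /
        (n + 1).factorial := fun k hk ↦ by
    rw [Rat.smul_def, Rat.cast_natCast,
      Nat.cast_choose ℂ (Finset.mem_range.mp hk).le, bernoulliCoeff]
    field_simp
  rw [Finset.sum_congr rfl hterm, ← Finset.sum_div, hsum, Nat.factorial_succ]
  have := Nat.cast_add_one_ne_zero (R := ℂ) n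
  simp only [eq_ratCast, Rat.cast_add, Rat.cast_natCast, Rat.cast_one, Nat.cast_mul,
    Nat.cast_add, Nat.cast_one]
  field_simp

theorem norm_bernoulliCoeff_le (a : ℂ) (n : ℕ) :
    ‖bernoulliCoeff a n‖ ≤ Real.exp ‖a‖ * 2 ^ n := by
  induction n using Nat.strong_induction_on with
  | _ n ih =>
    have hrec : bernoulliCoeff a n = a ^ n / n.factorial -
        ∑ k ∈ Finset.range n, bernoulliCoeff a k / (n + 1 - k).factorial := by
      rw [← sum_bernoulliCoeff_div_factorial a n, Finset.sum_range_succ]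
      simp
    have hexp : ‖a ^ n / n.factorial‖ ≤ Real.exp ‖a‖ := by
      simpa using Real.pow_div_factorial_le_exp _ (norm_nonneg a) n
    have hterm : ∀ k ∈ Finset.range n,
        ‖bernoulliCoeff a k / (n + 1 - k).factorial‖ ≤ Real.exp ‖a‖ * 2 ^ k / 2 := fun k hk ↦ by
      have hkn := Finset.mem_range.mp hk
      have hfact : (2 : ℝ) ≤ (n + 1 - k).factorial :=
        mod_cast Nat.factorial_le (show 2 ≤ n + 1 - k by lia)
      rw [norm_div, Complex.norm_natCast]
      gcongr
      exact ih k hkn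
    have hone : (1 : ℝ) ≤ 2 ^ n := one_le_pow₀ one_le_two
    calc ‖bernoulliCoeff a n‖
        ≤ Real.exp ‖a‖ + ∑ k ∈ Finset.range n, Real.exp ‖a‖ * 2 ^ k / 2 := by
          rw [hrec]
          exact (norm_sub_le _ _).trans (add_le_add hexp (norm_sum_le_of_le _ hterm))
      _ = Real.exp ‖a‖ * ((2 ^ n + 1) / 2) := by
          rw [← Finset.sum_div, ← Finset.mul_sum, geom_sum_eq (by norm_num)]
          ring
      _ ≤ Real.exp ‖a‖ * 2 ^ n := by
          gcongr
          linarith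

theorem summable_bernoulliCoeff_div_mul_pow {z : ℂ} (hz : ‖z‖ < 1 / 2) :
    Summable fun n : ℕ ↦ bernoulliCoeff a n / n * z ^ n := by
  have hgeo : Summable fun n : ℕ ↦ Real.exp ‖a‖ * (2 * ‖z‖) ^ n :=
    (summable_geometric_of_lt_one (by positivity) (by linarith)).mul_left _
  refine hgeo.of_norm_bounded fun n ↦ ?_
  calc ‖bernoulliCoeff a n / n * z ^ n‖ = ‖bernoulliCoeff a n‖ / n * ‖z‖ ^ n := by simp
    _ ≤ ‖bernoulliCoeff a n‖ * ‖z‖ ^ n := by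
        gcongr
        rw [div_eq_mul_inv]
        exact mul_le_of_le_one_right (norm_nonneg _) (Nat.cast_inv_le_one n)
    _ ≤ Real.exp ‖a‖ * 2 ^ n * ‖z‖ ^ n := by
        gcongr
        exact norm_bernoulliCoeff_le a n
    _ = Real.exp ‖a‖ * (2 * ‖z‖) ^ n := by rw [mul_pow, mul_assoc]

theorem tsum_bernoulliCoeff_mul_exp_sub_one {z : ℂ}
    (hz : Summable fun n ↦ bernoulliCoeff a n * z ^ n) :
    (∑' n, bernoulliCoeff a n * z ^ n) * (Complex.exp z - 1) = z * Complex.exp (a * z) := by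
  have hcoeff (n : ℕ) : bernoulliCoeff a n = (PowerSeries.mk fun n ↦
      Polynomial.aeval a ((1 / n.factorial : ℚ) • Polynomial.bernoulli n)).coeff n := by
    simp [bernoulliCoeff, Rat.smul_def, div_eq_inv_mul]
  simp only [hcoeff] at hz ⊢
  have hexp := hasSum_coeff_exp_sub_one_mul_pow z
  rw [← hexp.tsum_eq, ← tsum_coeff_mul_mul_pow hz.norm hexp.summable.norm,
    Polynomial.bernoulli_generating_function,
    (hasSum_coeff_X_mul_rescale_exp_mul_pow a z).tsum_eq]

variable {r : ℝ} (hr : Summable fun n : ℕ ↦ ‖bernoulliCoeff a n / n‖ * r ^ n)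
include hr

theorem mul_deriv_bernoulliLogSeries {z : ℂ} (hz : ‖z‖ < r) :
    (z * deriv (bernoulliLogSeries a) z + 1) * (Complex.exp z - 1) = z * Complex.exp (a * z) := by
  have hsum : HasSum (fun n ↦ bernoulliCoeff a n * z ^ n)
      (z * deriv (bernoulliLogSeries a) z + 1) := by
    refine ((hasSum_natCast_mul_mul_pow hr hz).add (hasSum_ite_eq 0 1)).congr_fun fun n ↦ ?_
    rcases n with _ | n
    · simp [bernoulliCoeff_zero]
    · have := Nat.cast_add_one_ne_zero (R := ℂ) n
      simp only [Nat.cast_add, Nat.cast_one, if_neg n.succ_ne_zero, add_zero]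
      field_simp
  rw [← hsum.tsum_eq, tsum_bernoulliCoeff_mul_exp_sub_one hsum.summable]

theorem hasDerivAt_bernoulliLogSeries_neg {s : ℂ} (hs : 0 < s.re) (hsr : ‖s‖ < r) :
    HasDerivAt (fun s ↦ bernoulliLogSeries a (-s))
      (Complex.exp (-a * s) / (1 - Complex.exp (-s)) - s⁻¹) s := by
  have hsr' : ‖-s‖ < r := by rwa [norm_neg]
  have hdiff : HasDerivAt (bernoulliLogSeries a) (deriv (bernoulliLogSeries a) (-s)) (-s) :=
    (differentiableAt_tsum_mul_pow hr hsr').hasDerivAt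
  refine (hdiff.comp s (hasDerivAt_neg s)).congr_deriv ?_
  have hode := mul_deriv_bernoulliLogSeries hr hsr'
  have hs₀ : s ≠ 0 := fun h ↦ by simp [h] at hs
  have hexp := one_sub_exp_neg_ne_zero hs
  rw [← neg_mul_comm a s] at hode
  generalize Complex.exp (-a * s) = E at hode ⊢
  field_simp
  linear_combination -hode

end Bernoulli

section Identity

variable {a : ℂ} {r : ℝ}

theorem tendsto_neg_log_sub_lerchExp_add_sub_bernoulliLogSeries (ha : ∀ k : ℕ, a ≠ -k)
    (hr : 0 < r) (hsum : Summable fun n : ℕ ↦ ‖bernoulliCoeff a n / n‖ * r ^ n) :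
    Tendsto (fun x : ℝ ↦ -Complex.log x - lerchExp a x + digammaConst a -
      bernoulliLogSeries a (-x)) (𝓝[>] 0) (𝓝 0) := by
  have hzero : bernoulliLogSeries a 0 = 0 :=
    (tsum_congr fun n ↦ by rcases n <;> simp).trans tsum_zero
  have hcont : ContinuousAt (bernoulliLogSeries a) 0 :=
    (differentiableAt_tsum_mul_pow hsum (by simpa using hr)).continuousAt
  have hB : Tendsto (fun x : ℝ ↦ bernoulliLogSeries a (-x)) (𝓝[>] 0) (𝓝 0) := by
    have hneg : Tendsto (fun x : ℝ ↦ -(x : ℂ)) (𝓝[>] 0) (𝓝 0) := by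
      have h : Continuous fun x : ℝ ↦ -(x : ℂ) := by fun_prop
      simpa using (h.tendsto 0).mono_left nhdsWithin_le_nhds
    simpa only [hzero, Function.comp_def] using hcont.tendsto.comp hneg
  have h := ((tendsto_lerchExp_add_log ha).const_sub (digammaConst a)).sub hB
  rw [sub_self, sub_zero] at h
  refine h.congr' ?_
  filter_upwards [self_mem_nhdsWithin] with x hx
  rw [Complex.ofReal_log (le_of_lt hx)]
  ring

theorem eqOn_halfPlane_inter_ball (ha : ∀ k : ℕ, a ≠ -k) (hr : 0 < r)
    (hsum : Summable fun n : ℕ ↦ ‖bernoulliCoeff a n / n‖ * r ^ n) :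
    EqOn (fun s ↦ -Complex.log s - lerchExp a s + digammaConst a)
      (fun s ↦ bernoulliLogSeries a (-s)) ({s | 0 < s.re} ∩ Metric.ball 0 r) := by
  set U : Set ℂ := {s | 0 < s.re} ∩ Metric.ball 0 r
  set f : ℂ → ℂ := fun s ↦ -Complex.log s - lerchExp a s + digammaConst a -
    bernoulliLogSeries a (-s)
  have hopen : IsOpen U := (isOpen_lt continuous_const Complex.continuous_re).inter
    Metric.isOpen_ball
  have hconn : IsPreconnected U :=
    ((convex_halfSpace_re_gt 0).inter (convex_ball 0 r)).isPreconnected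
  have hderiv : ∀ s ∈ U, HasDerivAt f 0 s := fun s ⟨hs, hsr⟩ ↦ by
    refine ((((Complex.hasDerivAt_log (.inl hs)).neg.sub (hasDerivAt_lerchExp ha hs)).add_const
      (digammaConst a)).sub (hasDerivAt_bernoulliLogSeries_neg hsum hs
        (mem_ball_zero_iff.mp hsr))).congr_deriv ?_
    ring
  obtain ⟨C, hC⟩ := hopen.exists_is_const_of_deriv_eq_zero hconn
    (fun s hs ↦ (hderiv s hs).differentiableAt.differentiableWithinAt)
    fun s hs ↦ (hderiv s hs).deriv
  have hC₀ : C = 0 := by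
    refine tendsto_nhds_unique (tendsto_const_nhds.congr' ?_)
      (tendsto_neg_log_sub_lerchExp_add_sub_bernoulliLogSeries ha hr hsum)
    filter_upwards [Ioo_mem_nhdsGT hr] with x hx
    exact (hC x ⟨by simpa using hx.1, by simpa [abs_of_pos hx.1] using hx.2⟩).symm
  exact fun s hs ↦ sub_eq_zero.mp ((hC s hs).trans hC₀)

theorem log_one_div_sub_lerchExp_add_eq (ha : ∀ k : ℕ, a ≠ -k) {w : ℂ} (hw : 0 < w.re)
    (hsum : Summable fun n : ℕ ↦ bernoulliCoeff a n / n * (-w) ^ n) :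
    Complex.log (1 / w) - lerchExp a w + digammaConst a = bernoulliLogSeries a (-w) := by
  have hw₀ : w ≠ 0 := fun h ↦ by simp [h] at hw
  have hnorm : Summable fun n : ℕ ↦ ‖bernoulliCoeff a n / n‖ * ‖w‖ ^ n := by
    simpa using hsum.norm
  have hclosure : {s : ℂ | 0 < s.re} ∩ Metric.closedBall 0 ‖w‖ ⊆
      closure ({s | 0 < s.re} ∩ Metric.ball 0 ‖w‖) := by
    rw [← closure_ball 0 (norm_ne_zero_iff.mpr hw₀)]
    exact (isOpen_lt continuous_const Complex.continuous_re).inter_closure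
  have heq := (eqOn_halfPlane_inter_ball ha (norm_pos_iff.mpr hw₀) hnorm).of_subset_closure
    (t := {s | 0 < s.re} ∩ Metric.closedBall 0 ‖w‖)
    (fun s hs ↦ ?_) ?_ (inter_subset_inter_right _ Metric.ball_subset_closedBall) hclosure
  · rw [one_div, Complex.log_inv w (Complex.slitPlane_arg_ne_pi (.inl hw))]
    exact heq ⟨hw, by simp⟩
  · exact (((Complex.hasDerivAt_log (.inl hs.1)).neg.sub
      (hasDerivAt_lerchExp ha hs.1)).add_const _).continuousAt.continuousWithinAt
  · exact (continuousOn_tsum_mul_pow hnorm).comp continuousOn_neg fun s hs ↦ by simpa using hs.2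

end Identity

theorem log_digamma_series_identity_general (a : ℂ) (ha : ∀ k : ℕ, a ≠ -k) :
    (∃ ρ > (0 : ℝ), ∀ w : ℂ, ‖w‖ < ρ → Summable fun n : ℕ ↦
      Polynomial.aeval a (Polynomial.bernoulli (n + 1)) * (-w) ^ (n + 1) /
        (((n : ℂ) + 1) * ((n + 1).factorial : ℂ))) ∧
    ∀ w : ℂ, 0 < w.re →
      Summable (fun n : ℕ ↦ Polynomial.aeval a (Polynomial.bernoulli (n + 1)) * (-w) ^ (n + 1) /
        (((n : ℂ) + 1) * ((n + 1).factorial : ℂ))) →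
      Complex.log (1 / w) - lerchExp a w + digammaConst a =
        ∑' n : ℕ, Polynomial.aeval a (Polynomial.bernoulli (n + 1)) * (-w) ^ (n + 1) /
          (((n : ℂ) + 1) * ((n + 1).factorial : ℂ)) := by
  have hterm (w : ℂ) (n : ℕ) : Polynomial.aeval a (Polynomial.bernoulli (n + 1)) *
      (-w) ^ (n + 1) / (((n : ℂ) + 1) * ((n + 1).factorial : ℂ)) =
        bernoulliCoeff a (n + 1) / (n + 1 : ℕ) * (-w) ^ (n + 1) := by
    rw [bernoulliCoeff, Nat.cast_add_one]
    field_simp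
  have hsummable (w : ℂ) : Summable (fun n ↦ bernoulliCoeff a (n + 1) / (n + 1 : ℕ) *
      (-w) ^ (n + 1)) ↔ Summable fun n : ℕ ↦ bernoulliCoeff a n / n * (-w) ^ n :=
    summable_nat_add_iff (f := fun n : ℕ ↦ bernoulliCoeff a n / n * (-w) ^ n) 1
  simp only [hterm, hsummable]
  refine ⟨⟨1 / 2, one_half_pos, fun w hw ↦ summable_bernoulliCoeff_div_mul_pow
    (by rwa [norm_neg])⟩, fun w hw hsum ↦ ?_⟩
  rw [log_one_div_sub_lerchExp_add_eq ha hw hsum, bernoulliLogSeries, hsum.tsum_eq_zero_add]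
  simp

/-- The identity
`Log(1/w) - ∑_{m≥0} e^{-w(m+a)}/(m+a) + C_a = ∑_{n≥0} B_{n+1}(a)(-w)^{n+1}/((n+1)(n+1)!)`:
the right-hand series converges for all sufficiently small `|w|`, and the equality holds
for all `w` with `Re(w) > 0` for which the right-hand series converges. -/
theorem log_digamma_series_identity (a : ℝ) (ha : ∀ k : ℕ, a ≠ -(k : ℝ)) :
    (∃ ρ > (0:ℝ), ∀ w : ℂ, ‖w‖ < ρ → Summable (fun n : ℕ =>
      (bernoulliPoly (n + 1) a : ℂ) * (-w) ^ (n + 1) /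
        (((n : ℂ) + 1) * ((n + 1).factorial : ℂ)))) ∧
    ∀ w : ℂ, 0 < w.re →
      Summable (fun n : ℕ => (bernoulliPoly (n + 1) a : ℂ) * (-w) ^ (n + 1) /
        (((n : ℂ) + 1) * ((n + 1).factorial : ℂ))) →
      Complex.log (1 / w) -
          (∑' m : ℕ, Complex.exp (-w * ((m : ℂ) + (a : ℂ))) / ((m : ℂ) + (a : ℂ))) +
          (Cconst a : ℂ) =
        ∑' n : ℕ, (bernoulliPoly (n + 1) a : ℂ) * (-w) ^ (n + 1) /
          (((n : ℂ) + 1) * ((n + 1).factorial : ℂ)) := by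
  simpa only [ofReal_bernoulliPoly, ofReal_Cconst, lerchExp] using
    log_digamma_series_identity_general a fun k ↦ mod_cast ha k

end
end

section
/- For every a \in \mathbb{R} with a \notin -\mathbb{N}_0, \lim_{w \to 0,\, Re(w) > 0} \left( \operatorname{Log}(1/w) - \sum_{m \ge 0} \frac{e^{-w(m+a)}}{m+a} \right) = -C_a. -/
/-!
With `z = e^{-w}`, the sum in question is `e^{-aw} Φ_a(z)`, where `Φ_a(z) = ∑_{m≥0} z^m/(m+a)`.
Partial fractions give `Φ_a(z) - Φ_1(z) = (1-a) ∑_{m≥0} z^m/((m+a)(m+1))`, an absolutely convergent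
series on the closed unit disc, so this difference tends to `C_a` as `z → 1` inside the disc. Since
`z Φ_1(z) = -Log(1-z)`, the function `Φ_a(z) + Log(1-z)` has the same limit. Finally
`Log(1 - e^{-w}) - Log w → 0`, and the factor `e^{-aw}` is harmless because
`(e^{-aw} - 1) Log w → 0`.
-/

open Filter Topology Set

noncomputable section

section Series

open Asymptotics

variable {𝕜 : Type*} [RCLike 𝕜]

theorem isEquivalent_natCast_add_const (a : 𝕜) :
    (fun m : ℕ => (m : 𝕜) + a) ~[atTop] fun m : ℕ => (m : 𝕜) :=
  IsEquivalent.refl.add_const_of_norm_tendsto_atTop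
    (tendsto_natCast_atTop_atTop (R := ℝ) |>.congr fun m => (RCLike.norm_natCast m).symm)

theorem summable_one_div_natCast_add_mul_natCast_add (a b : 𝕜) :
    Summable fun m : ℕ => 1 / (((m : 𝕜) + a) * ((m : 𝕜) + b)) := by
  refine summable_of_isBigO_nat (Real.summable_one_div_nat_pow.mpr one_lt_two) ?_
  have h := ((isEquivalent_natCast_add_const a).mul (isEquivalent_natCast_add_const b)).inv.isBigO
  exact (h.trans (isBigO_of_le _ fun m => by simp [sq])).congr_left fun m => (one_div _).symm

theorem summable_pow_div_natCast_add (a : 𝕜) {z : 𝕜} (hz : ‖z‖ < 1) :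
    Summable fun m : ℕ => z ^ m / (m + a) := by
  refine summable_of_isBigO_nat (summable_geometric_of_lt_one (norm_nonneg z) hz) ?_
  have hpow : (fun m : ℕ => z ^ m) =O[atTop] fun m : ℕ => ‖z‖ ^ m :=
    .of_norm_left (by simpa only [norm_pow] using isBigO_refl _ _)
  have hinv : (fun m : ℕ => ((m : 𝕜) + a)⁻¹) =O[atTop] fun _ => (1 : ℝ) :=
    ((isEquivalent_natCast_add_const a).inv.tendsto_nhds_iff.mpr
      (tendsto_inv_atTop_nhds_zero_nat (𝕜 := 𝕜))).isBigO_one ℝ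
  simpa [div_eq_mul_inv] using hpow.mul hinv

end Series

theorem continuousOn_tsum_pow_mul {R : Type*} [NormedRing R] [NormOneClass R] [CompleteSpace R]
    {c : ℕ → R} (hc : Summable fun m => ‖c m‖) :
    ContinuousOn (fun z => ∑' m, z ^ m * c m) (Metric.closedBall 0 1) := by
  refine continuousOn_tsum (fun m => by fun_prop) hc fun m z hz => ?_
  have hpow : ‖z ^ m‖ ≤ 1 :=
    (norm_pow_le z m).trans (pow_le_one₀ (norm_nonneg z) (mem_closedBall_zero_iff.mp hz))
  exact (norm_mul_le _ _).trans (mul_le_of_le_one_left (norm_nonneg _) hpow)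

theorem norm_log_le_abs_log_norm_add_pi (z : ℂ) :
    ‖Complex.log z‖ ≤ |Real.log ‖z‖| + Real.pi := by
  refine (Complex.norm_le_abs_re_add_abs_im _).trans ?_
  rw [Complex.log_re, Complex.log_im]
  gcongr
  exact Complex.abs_arg_le_pi z

theorem tendsto_mul_log_nhds_zero :
    Tendsto (fun z : ℂ => z * Complex.log z) (𝓝 0) (𝓝 0) := by
  have hnorm : Tendsto (fun z : ℂ => ‖z‖) (𝓝 0) (𝓝 0) := tendsto_norm_zero
  have hbound : Tendsto (fun z : ℂ => |‖z‖ * Real.log ‖z‖| + ‖z‖ * Real.pi) (𝓝 0) (𝓝 0) := by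
    simpa using ((Real.continuous_mul_log.tendsto 0).comp hnorm).abs.add (hnorm.mul_const Real.pi)
  refine squeeze_zero_norm (fun z => ?_) hbound
  rw [norm_mul, abs_mul, abs_norm, ← mul_add]
  gcongr
  exact norm_log_le_abs_log_norm_add_pi z

theorem tendsto_sub_mul_log_nhds_zero {f : ℂ → ℂ} (hf : DifferentiableAt ℂ f 0) :
    Tendsto (fun z => (f z - f 0) * Complex.log z) (𝓝 0) (𝓝 0) := by
  have h := hf.isBigO_sub.mul (Asymptotics.isBigO_refl Complex.log (𝓝 0))
  simp only [sub_zero] at h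
  exact h.trans_tendsto tendsto_mul_log_nhds_zero

theorem log_div_of_re_pos {z w : ℂ} (hz : 0 < z.re) (hw : 0 < w.re) :
    Complex.log (z / w) = Complex.log z - Complex.log w := by
  have hz0 : z ≠ 0 := by rintro rfl; simp at hz
  have hw0 : w ≠ 0 := by rintro rfl; simp at hw
  have hargz := abs_lt.mp (Complex.abs_arg_lt_pi_div_two_iff.mpr (Or.inl hz))
  have hargw := abs_lt.mp (Complex.abs_arg_lt_pi_div_two_iff.mpr (Or.inl hw))
  have hwpi : w.arg ≠ Real.pi := by linarith [Real.pi_pos]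
  have harg : z.arg + w⁻¹.arg ∈ Ioc (-Real.pi) Real.pi := by
    rw [Complex.arg_inv, if_neg hwpi]
    constructor <;> linarith
  rw [div_eq_mul_inv, Complex.log_mul hz0 (inv_ne_zero hw0) harg, Complex.log_inv w hwpi,
    sub_eq_add_neg]

theorem tendsto_log_sub_log_of_tendsto_div_one {α : Type*} {l : Filter α} {f g : α → ℂ}
    (hf : ∀ᶠ x in l, 0 < (f x).re) (hg : ∀ᶠ x in l, 0 < (g x).re)
    (hfg : Tendsto (fun x => f x / g x) l (𝓝 1)) :
    Tendsto (fun x => Complex.log (f x) - Complex.log (g x)) l (𝓝 0) := by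
  have hlog := hfg.clog Complex.one_mem_slitPlane
  rw [Complex.log_one] at hlog
  refine hlog.congr' ?_
  filter_upwards [hf, hg] with x hfx hgx using log_div_of_re_pos hfx hgx

/-- The function `Φ_a(z) = ∑_{m≥0} z^m/(m+a)`, that is, the Lerch transcendent `Φ(z, s, a)` at
`s = 1`; at `z = e^{-w}` it is `e^{aw}` times the sum in the theorem. -/
def lerchOne (a z : ℂ) : ℂ := ∑' m : ℕ, z ^ m / (m + a)

/-- The constant `C_a` for complex `a`; it is the limit of `Φ_a(z) + Log(1-z)` as `z → 1` in the
unit disc. -/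
def lerchConst (a : ℂ) : ℂ := (1 - a) * ∑' m : ℕ, 1 / ((m + a) * (m + 1))

theorem lerchConst_ofReal (a : ℝ) : lerchConst a = Cconst a := by
  simp [lerchConst, Cconst, Complex.ofReal_tsum]

theorem mul_lerchOne_one {z : ℂ} (hz : ‖z‖ < 1) :
    z * lerchOne 1 z = -Complex.log (1 - z) := by
  have hlog := (hasSum_nat_add_iff' 1).mpr (Complex.hasSum_taylorSeries_neg_log hz)
  simp only [Finset.sum_range_one, Nat.cast_zero, div_zero, sub_zero] at hlog
  rw [← hlog.tsum_eq, lerchOne, ← tsum_mul_left]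
  exact tsum_congr fun m => by rw [pow_succ', mul_div_assoc, Nat.cast_add_one]

theorem lerchOne_sub_lerchOne {a b z : ℂ} (ha : ∀ k : ℕ, a ≠ -k) (hb : ∀ k : ℕ, b ≠ -k)
    (hz : ‖z‖ < 1) :
    lerchOne a z - lerchOne b z = (b - a) * ∑' m : ℕ, z ^ m * (1 / ((m + a) * (m + b))) := by
  rw [lerchOne, lerchOne, ← (summable_pow_div_natCast_add a hz).tsum_sub
    (summable_pow_div_natCast_add b hz), ← tsum_mul_left]
  refine tsum_congr fun m => ?_
  have hma : (m : ℂ) + a ≠ 0 := fun h => ha m (eq_neg_of_add_eq_zero_right h)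
  have hmb : (m : ℂ) + b ≠ 0 := fun h => hb m (eq_neg_of_add_eq_zero_right h)
  field_simp
  ring

theorem tendsto_lerchOne_sub_lerchOne_one {a : ℂ} (ha : ∀ k : ℕ, a ≠ -k) :
    Tendsto (fun z => lerchOne a z - lerchOne 1 z) (𝓝[Metric.ball 0 1] 1)
      (𝓝 (lerchConst a)) := by
  have hcont := continuousOn_tsum_pow_mul (summable_one_div_natCast_add_mul_natCast_add a 1).norm
  have hlim := ((hcont 1 (by simp)).mono Metric.ball_subset_closedBall).tendsto.const_mul (1 - a)
  simp only [one_pow, one_mul] at hlim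
  refine hlim.congr' ?_
  filter_upwards [self_mem_nhdsWithin] with z hz
  refine (lerchOne_sub_lerchOne ha (fun k h => ?_) (mem_ball_zero_iff.mp hz)).symm
  exact Nat.cast_add_one_ne_zero k (by rw [h]; ring : (k : ℂ) + 1 = 0)

theorem tendsto_lerchOne_add_log {a : ℂ} (ha : ∀ k : ℕ, a ≠ -k) :
    Tendsto (fun z => lerchOne a z + Complex.log (1 - z)) (𝓝[Metric.ball 0 1] 1)
      (𝓝 (lerchConst a)) := by
  have hid : Tendsto (fun z : ℂ => z) (𝓝[Metric.ball 0 1] 1) (𝓝 1) := nhdsWithin_le_nhds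
  have hsub : Tendsto (fun z : ℂ => 1 - z) (𝓝[Metric.ball 0 1] 1) (𝓝 0) := by
    simpa using hid.const_sub 1
  have hlog := (tendsto_mul_log_nhds_zero.comp hsub).div hid one_ne_zero
  have hlim := (tendsto_lerchOne_sub_lerchOne_one ha).sub hlog
  rw [zero_div, sub_zero] at hlim
  refine hlim.congr' ?_
  filter_upwards [self_mem_nhdsWithin, hid.eventually_ne one_ne_zero] with z hz hz0
  have hone : lerchOne 1 z = -Complex.log (1 - z) / z :=
    eq_div_of_mul_eq hz0 (by rw [mul_comm, mul_lerchOne_one (mem_ball_zero_iff.mp hz)])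
  simp only [Pi.div_apply, Function.comp_apply, hone]
  field_simp
  ring

theorem norm_exp_neg_lt_one_s17 {w : ℂ} (hw : 0 < w.re) : ‖Complex.exp (-w)‖ < 1 := by
  rwa [Complex.norm_exp, Real.exp_lt_one_iff, Complex.neg_re, neg_lt_zero]

theorem re_one_sub_pos {z : ℂ} (hz : ‖z‖ < 1) : 0 < (1 - z).re := by
  rw [Complex.sub_re, Complex.one_re, sub_pos]
  exact (Complex.re_le_norm z).trans_lt hz

theorem tendsto_exp_neg_nhdsWithin_ball :
    Tendsto (fun w : ℂ => Complex.exp (-w)) (𝓝[{w : ℂ | 0 < w.re}] 0)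
      (𝓝[Metric.ball 0 1] 1) := by
  have hcont : Continuous fun w : ℂ => Complex.exp (-w) := by fun_prop
  refine tendsto_nhdsWithin_of_tendsto_nhds_of_eventually_within _ ?_ ?_
  · simpa using (hcont.tendsto 0).mono_left nhdsWithin_le_nhds
  · filter_upwards [self_mem_nhdsWithin] with w hw
    exact mem_ball_zero_iff.mpr (norm_exp_neg_lt_one_s17 hw)

theorem tendsto_one_sub_exp_neg_div :
    Tendsto (fun w : ℂ => (1 - Complex.exp (-w)) / w) (𝓝[≠] 0) (𝓝 1) := by
  have hderiv : HasDerivAt (fun w : ℂ => 1 - Complex.exp (-w)) 1 0 := by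
    simpa using (hasDerivAt_neg (0 : ℂ)).cexp.const_sub 1
  exact hderiv.tendsto_slope.congr fun w => by simp [slope_def_field]

theorem tendsto_log_one_sub_exp_neg_sub_log_s17 :
    Tendsto (fun w : ℂ => Complex.log (1 - Complex.exp (-w)) - Complex.log w)
      (𝓝[{w : ℂ | 0 < w.re}] 0) (𝓝 0) := by
  have hne : {w : ℂ | 0 < w.re} ⊆ {0}ᶜ := by
    rintro _ hw rfl
    simp at hw
  refine tendsto_log_sub_log_of_tendsto_div_one ?_ self_mem_nhdsWithin
    (tendsto_one_sub_exp_neg_div.mono_left (nhdsWithin_mono 0 hne))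
  filter_upwards [self_mem_nhdsWithin] with w hw using re_one_sub_pos (norm_exp_neg_lt_one_s17 hw)

theorem tsum_exp_neg_mul_div_eq_exp_mul_lerchOne (a w : ℂ) :
    ∑' m : ℕ, Complex.exp (-w * (m + a)) / (m + a)
      = Complex.exp (-w * a) * lerchOne a (Complex.exp (-w)) := by
  rw [lerchOne, ← tsum_mul_left]
  refine tsum_congr fun m => ?_
  rw [← Complex.exp_nat_mul, mul_div_assoc', ← Complex.exp_add]
  ring_nf

theorem log_sum_tendsto_neg_Cconst_general (a : ℂ) (ha : ∀ k : ℕ, a ≠ -(k : ℂ)) :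
    Tendsto (fun w : ℂ =>
        Complex.log (1 / w) - ∑' m : ℕ, Complex.exp (-w * (m + a)) / (m + a))
      (𝓝[{w : ℂ | 0 < w.re}] 0) (𝓝 (-lerchConst a)) := by
  have hdiff : Differentiable ℂ fun w : ℂ => Complex.exp (-w * a) := by fun_prop
  have hexp : Tendsto (fun w : ℂ => Complex.exp (-w * a)) (𝓝[{w : ℂ | 0 < w.re}] 0) (𝓝 1) := by
    simpa using (hdiff.continuous.tendsto 0).mono_left nhdsWithin_le_nhds
  have hfactor : Tendsto (fun w : ℂ => (Complex.exp (-w * a) - 1) * Complex.log w)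
      (𝓝[{w : ℂ | 0 < w.re}] 0) (𝓝 0) := by
    simpa using (tendsto_sub_mul_log_nhds_zero (hdiff 0)).mono_left nhdsWithin_le_nhds
  have hlerch := (tendsto_lerchOne_add_log ha).comp tendsto_exp_neg_nhdsWithin_ball
  have hlim := ((hexp.mul tendsto_log_one_sub_exp_neg_sub_log_s17).add hfactor).sub (hexp.mul hlerch)
  rw [mul_zero, add_zero, one_mul, zero_sub] at hlim
  refine hlim.congr' ?_
  filter_upwards [self_mem_nhdsWithin] with w hw
  have hlog : Complex.log (1 / w) = -Complex.log w := by
    rw [log_div_of_re_pos (by simp) hw, Complex.log_one, zero_sub]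
  rw [hlog, tsum_exp_neg_mul_div_eq_exp_mul_lerchOne, Function.comp_apply]
  ring

/-- As `w → 0` in the right half-plane,
`Log(1/w) - ∑_{m≥0} e^{-w(m+a)}/(m+a) → -C_a`. -/
theorem log_sum_tendsto_neg_Cconst (a : ℝ) (ha : ∀ k : ℕ, a ≠ -(k : ℝ)) :
    Tendsto (fun w : ℂ =>
        Complex.log (1 / w) -
          ∑' m : ℕ, Complex.exp (-w * ((m : ℂ) + (a : ℂ))) / ((m : ℂ) + (a : ℂ)))
      (𝓝[{w : ℂ | 0 < w.re}] 0) (𝓝 (-(Cconst a : ℂ))) := by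
  rw [← lerchConst_ofReal]
  exact log_sum_tendsto_neg_Cconst_general a fun k => by exact_mod_cast ha k

end
end

section
/- Let p(n) denote the number of partitions of n and P(q) = \sum_{n \ge 0} p(n) q^n its generating function, converging for |q| < 1. For every \Delta > 0, in the region of complex numbers z = x + iy with x > 0 and |y| \le \Delta x, one has P(e^{-z}) \sim \sqrt{\frac{z}{2\pi}}\, e^{\pi^2/(6z)} as z \to 0; that is, P(e^{-z}) \sqrt{2\pi/z}\, e^{-\pi^2/(6z)} \to 1 as z \to 0 within any such region. -/
/-!
Euler's product `P(q) = ∏ (1 - qⁿ)⁻¹` makes `P(e^{2πiτ})` the reciprocal of Dedekind's `η(τ)`, up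
to the factor `e^{πiτ/12}`. The transformation `τ ↦ -1/τ` of `η` at `τ = iz/(2π)` then becomes an
exact identity for `Re z > 0`,
`P(e^{-z}) √(2π/z) e^{-π²/(6z)} = e^{-z/24} P(e^{-4π²/z})`.
The right-hand side tends to `1` as soon as `Re (1/z) → ∞`: this forces both `z → 0` and
`e^{-4π²/z} → 0`, and `P` is continuous at `0` with `P(0) = 1`. In a sector
`|Im z| ≤ Δ Re z` one has `Re (1/z) ≥ 1 / ((1 + Δ²) Re z)`.

Euler's product comes from the partitions into parts of size at most `N`, counted by a finite
product of geometric series, on letting `N → ∞` by dominated convergence.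
-/

open Filter Topology Set

noncomputable section

/-- The partition function `p(n)`. -/
def partitionFun (n : ℕ) : ℕ := Fintype.card (Nat.Partition n)

section PowerSeriesEvaluation

open PowerSeries

/-- The power series `A` converges absolutely at `q`, with sum `a`. -/
structure HasAbsSumAt {R : Type*} [NormedRing R] (A : R⟦X⟧) (q a : R) : Prop where
  summable_norm : Summable fun n ↦ ‖A.coeff n * q ^ n‖
  hasSum : HasSum (fun n ↦ A.coeff n * q ^ n) a

variable {R : Type*} [NormedCommRing R] {A B : R⟦X⟧} {q a b : R}

theorem HasAbsSumAt.one (q : R) : HasAbsSumAt (1 : R⟦X⟧) q 1 where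
  summable_norm := summable_of_ne_finset_zero (s := {0}) fun n hn ↦ by
    simp [coeff_one, show n ≠ 0 by simpa using hn]
  hasSum := by
    simpa using hasSum_single (f := fun n ↦ (1 : R⟦X⟧).coeff n * q ^ n) 0
      fun n hn ↦ by simp [coeff_one, hn]

theorem HasAbsSumAt.expand {m : ℕ} (hm : m ≠ 0) (hA : HasAbsSumAt A (q ^ m) a) :
    HasAbsSumAt (A.expand m hm) q a := by
  have hinj : Function.Injective (m * ·) := mul_right_injective₀ hm
  have hzero : ∀ n ∉ range (m * ·), (A.expand m hm).coeff n * q ^ n = 0 := fun n hn ↦ by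
    rw [coeff_expand_of_not_dvd _ _ _ fun ⟨k, hk⟩ ↦ hn ⟨k, hk.symm⟩, zero_mul]
  have hcomp : (fun n ↦ (A.expand m hm).coeff n * q ^ n) ∘ (m * ·) =
      fun n ↦ A.coeff n * (q ^ m) ^ n := by
    ext n
    simp only [Function.comp_apply, coeff_expand_mul, pow_mul]
  constructor
  · rw [← hinj.summable_iff fun n hn ↦ by rw [hzero n hn, norm_zero]]
    exact hA.summable_norm.congr fun n ↦ congrArg norm (congrFun hcomp n).symm
  · rw [← hinj.hasSum_iff hzero, hcomp]
    exact hA.hasSum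

theorem HasAbsSumAt.mul [CompleteSpace R] (hA : HasAbsSumAt A q a) (hB : HasAbsSumAt B q b) :
    HasAbsSumAt (A * B) q (a * b) := by
  have hcauchy : (fun n ↦ (A * B).coeff n * q ^ n) =
      fun n ↦ ∑ kl ∈ Finset.HasAntidiagonal.antidiagonal n,
        (A.coeff kl.1 * q ^ kl.1) * (B.coeff kl.2 * q ^ kl.2) := by
    ext n
    rw [coeff_mul, Finset.sum_mul]
    refine Finset.sum_congr rfl fun kl hkl ↦ ?_
    rw [← Finset.HasAntidiagonal.mem_antidiagonal.mp hkl, pow_add]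
    ring
  have hnorm : Summable fun n ↦ ‖(A * B).coeff n * q ^ n‖ := by
    simpa only [← congrFun hcauchy] using
      summable_norm_sum_mul_antidiagonal_of_summable_norm hA.summable_norm hB.summable_norm
  refine ⟨hnorm, hnorm.of_norm.hasSum_iff.mpr ?_⟩
  rw [hcauchy,
    ← tsum_mul_tsum_eq_tsum_sum_antidiagonal_of_summable_norm hA.summable_norm hB.summable_norm,
    hA.hasSum.tsum_eq, hB.hasSum.tsum_eq]

theorem HasAbsSumAt.prod [CompleteSpace R] {ι : Type*} {s : Finset ι} {A : ι → R⟦X⟧} {a : ι → R}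
    (h : ∀ i ∈ s, HasAbsSumAt (A i) q (a i)) :
    HasAbsSumAt (∏ i ∈ s, A i) q (∏ i ∈ s, a i) := by
  induction s using Finset.cons_induction with
  | empty => simpa using HasAbsSumAt.one q
  | cons i s hi ih =>
    simp only [Finset.prod_cons]
    exact (h i (Finset.mem_cons_self i s)).mul (ih fun j hj ↦ h j (Finset.mem_cons_of_mem hj))

end PowerSeriesEvaluation

section GeometricSeries

open PowerSeries
open scoped PowerSeries.WithPiTopology

variable {𝕜 : Type*} [NormedField 𝕜] {q : 𝕜}

theorem hasAbsSumAt_mk_one (hq : ‖q‖ < 1) : HasAbsSumAt (mk 1) q (1 - q)⁻¹ where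
  summable_norm := by simpa using summable_geometric_of_lt_one (norm_nonneg q) hq
  hasSum := by simpa using hasSum_geometric_of_norm_lt_one hq

theorem tsum_X_pow_mul_eq_expand {R : Type*} [CommRing R] [TopologicalSpace R] [T2Space R]
    [IsTopologicalRing R] {m : ℕ} (hm : m ≠ 0) :
    ∑' j : ℕ, (X : R⟦X⟧) ^ (m * j) = (mk 1 : R⟦X⟧).expand m hm := by
  have hexpand : (mk 1 : R⟦X⟧).expand m hm * (1 - X ^ m) = 1 := by
    rw [← expand_X m hm, ← map_one (expand m hm), ← map_sub, ← map_mul, mk_one_mul_one_sub_eq_one]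
  simp_rw [pow_mul]
  exact (left_inv_eq_right_inv hexpand
    (WithPiTopology.one_sub_mul_tsum_pow_of_constantCoeff_eq_zero (by simp [hm]))).symm

theorem hasAbsSumAt_tsum_X_pow_mul (hq : ‖q‖ < 1) {m : ℕ} (hm : m ≠ 0) :
    HasAbsSumAt (∑' j : ℕ, (X : 𝕜⟦X⟧) ^ (m * j)) q (1 - q ^ m)⁻¹ := by
  rw [tsum_X_pow_mul_eq_expand hm]
  refine (hasAbsSumAt_mk_one ?_).expand hm
  rw [norm_pow]
  exact pow_lt_one₀ (norm_nonneg q) hq hm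

end GeometricSeries

section EulerProduct

open PowerSeries Nat.Partition
open scoped PowerSeries.WithPiTopology

variable {𝕜 : Type*} [NormedField 𝕜] [CompleteSpace 𝕜] {q : 𝕜}
  (p : ℕ → Prop) [DecidablePred p]

theorem mk_card_restricted_and_le_eq_prod {R : Type*} [CommSemiring R] [TopologicalSpace R]
    [T2Space R] [IsTopologicalSemiring R] (N : ℕ) :
    (PowerSeries.mk fun n ↦ ((restricted n fun i ↦ p i ∧ i ≤ N).card : R)) =
      ∏ i ∈ Finset.range N, if p (i + 1) then ∑' j : ℕ, X ^ ((i + 1) * j) else 1 := by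
  refine (hasProd_powerSeriesMk_card_restricted R fun i ↦ p i ∧ i ≤ N).unique ?_
  rw [Finset.prod_congr rfl (g := fun i ↦
    if p (i + 1) ∧ i + 1 ≤ N then ∑' j : ℕ, (X : R⟦X⟧) ^ ((i + 1) * j) else 1)]
  · exact hasProd_prod_of_ne_finset_one fun i hi ↦
      if_neg fun h ↦ hi (Finset.mem_range.mpr h.2)
  · intro i hi
    simp only [Nat.succ_le_iff.mpr (Finset.mem_range.mp hi), and_true]

theorem hasAbsSumAt_mk_card_restricted_and_le (hq : ‖q‖ < 1) (N : ℕ) :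
    HasAbsSumAt (PowerSeries.mk fun n ↦ ((restricted n fun i ↦ p i ∧ i ≤ N).card : 𝕜)) q
      (∏ i ∈ Finset.range N, if p (i + 1) then (1 - q ^ (i + 1))⁻¹ else 1) := by
  rw [mk_card_restricted_and_le_eq_prod]
  refine HasAbsSumAt.prod fun i _ ↦ ?_
  split_ifs
  · exact hasAbsSumAt_tsum_X_pow_mul hq i.succ_ne_zero
  · exact HasAbsSumAt.one q

theorem restricted_and_le_eq_restricted {n N : ℕ} (h : n ≤ N) :
    (restricted n fun i ↦ p i ∧ i ≤ N) = restricted n p :=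
  Finset.filter_congr fun π _ ↦
    forall₂_congr fun _ hi ↦ and_iff_left ((π.le_of_mem_parts hi).trans h)

theorem multipliable_ite_inv_one_sub_pow (hq : ‖q‖ < 1) :
    Multipliable fun i ↦ if p (i + 1) then (1 - q ^ (i + 1))⁻¹ else 1 := by
  have hbound (i : ℕ) : ‖(if p (i + 1) then (1 - q ^ (i + 1))⁻¹ else 1) - 1‖ ≤
      ‖q‖ ^ (i + 1) * (1 - ‖q‖)⁻¹ := by
    have hsub : 0 < 1 - ‖q‖ := sub_pos.mpr hq
    split_ifs
    · have hle : 1 - ‖q‖ ≤ ‖1 - q ^ (i + 1)‖ := calc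
        1 - ‖q‖ ≤ 1 - ‖q‖ ^ (i + 1) := by
          gcongr
          exact pow_le_of_le_one (norm_nonneg q) hq.le i.succ_ne_zero
        _ ≤ ‖1 - q ^ (i + 1)‖ := by
          simpa using norm_sub_norm_le (1 : 𝕜) (q ^ (i + 1))
      have hne : 1 - q ^ (i + 1) ≠ 0 := norm_pos_iff.mp (hsub.trans_le hle)
      rw [show (1 - q ^ (i + 1))⁻¹ - 1 = q ^ (i + 1) * (1 - q ^ (i + 1))⁻¹ by field_simp; ring,
        norm_mul, norm_pow, norm_inv]
      gcongr
    · rw [sub_self, norm_zero]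
      positivity
  have hsummable : Summable fun i ↦ ‖q‖ ^ (i + 1) * (1 - ‖q‖)⁻¹ :=
    ((summable_nat_add_iff 1).mpr (summable_geometric_of_lt_one (norm_nonneg q) hq)).mul_right _
  simpa using multipliable_one_add_of_summable
    (hsummable.of_nonneg_of_le (fun _ ↦ norm_nonneg _) hbound)

theorem summable_card_restricted_mul_pow {r : ℝ} (hr0 : 0 ≤ r) (hr : r < 1) :
    Summable fun n ↦ ((restricted n p).card : ℝ) * r ^ n := by
  have hr' : ‖r‖ < 1 := by rwa [Real.norm_of_nonneg hr0]
  obtain ⟨C, hC⟩ :=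
    (multipliable_ite_inv_one_sub_pow p hr').hasProd.tendsto_prod_nat.bddAbove_range
  refine summable_of_sum_range_le (c := C) (fun n ↦ by positivity) fun N ↦ ?_
  have hN := (hasAbsSumAt_mk_card_restricted_and_le p hr' N).hasSum
  simp only [coeff_mk] at hN
  calc ∑ n ∈ Finset.range N, ((restricted n p).card : ℝ) * r ^ n
      = ∑ n ∈ Finset.range N, ((restricted n fun i ↦ p i ∧ i ≤ N).card : ℝ) * r ^ n :=
        Finset.sum_congr rfl fun n hn ↦ by
          rw [restricted_and_le_eq_restricted p (Finset.mem_range.mp hn).le]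
    _ ≤ ∏ i ∈ Finset.range N, if p (i + 1) then (1 - r ^ (i + 1))⁻¹ else 1 :=
        sum_le_hasSum _ (fun n _ ↦ by positivity) hN
    _ ≤ C := hC ⟨N, rfl⟩

theorem tsum_card_restricted_mul_pow (hq : ‖q‖ < 1) :
    ∑' n, ((restricted n p).card : 𝕜) * q ^ n =
      ∏' i : ℕ, if p (i + 1) then (1 - q ^ (i + 1))⁻¹ else 1 := by
  refine tendsto_nhds_unique ?_
    (multipliable_ite_inv_one_sub_pow p hq).hasProd.tendsto_prod_nat
  have htrunc (N : ℕ) := (hasAbsSumAt_mk_card_restricted_and_le p hq N).hasSum.tsum_eq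
  simp only [coeff_mk] at htrunc
  simp only [← htrunc]
  refine tendsto_tsum_of_dominated_convergence
    (summable_card_restricted_mul_pow p (norm_nonneg q) hq) (fun n ↦ ?_) (.of_forall fun N n ↦ ?_)
  · refine tendsto_atTop_of_eventually_const (i₀ := n) fun N hN ↦ ?_
    rw [restricted_and_le_eq_restricted p hN]
  · have hsub : (restricted n fun i ↦ p i ∧ i ≤ N) ⊆ restricted n p :=
      Finset.monotone_filter_right _ fun π _ hπ i hi ↦ (hπ i hi).1
    rw [norm_mul, norm_pow]
    gcongr
    calc ‖((restricted n fun i ↦ p i ∧ i ≤ N).card : 𝕜)‖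
        ≤ (restricted n fun i ↦ p i ∧ i ≤ N).card := by simpa using Nat.norm_cast_le (α := 𝕜) _
      _ ≤ (restricted n p).card := by exact_mod_cast Finset.card_le_card hsub

theorem tsum_partitionFun_mul_pow (hq : ‖q‖ < 1) :
    ∑' n, (partitionFun n : 𝕜) * q ^ n = ∏' i : ℕ, (1 - q ^ (i + 1))⁻¹ := by
  simpa [restricted, partitionFun] using tsum_card_restricted_mul_pow (fun _ ↦ True) hq

end EulerProduct

section Modularity

open Complex ModularForm
open scoped Real

/-- The generating function `P(q) = ∑ p(n) qⁿ` of the partition function. It is meaningful for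
`‖q‖ < 1`; where the series diverges the sum takes the junk value `0`. -/
def partitionGenFun (q : ℂ) : ℂ := ∑' n, (partitionFun n : ℂ) * q ^ n

theorem partitionGenFun_mul_tprod_one_sub_pow {q : ℂ} (hq : ‖q‖ < 1) :
    partitionGenFun q * ∏' i : ℕ, (1 - q ^ (i + 1)) = 1 := by
  have hinv : Multipliable fun i : ℕ ↦ (1 - q ^ (i + 1))⁻¹ := by
    simpa using multipliable_ite_inv_one_sub_pow (fun _ ↦ True) hq
  have hne (i : ℕ) : 1 - q ^ (i + 1) ≠ 0 := sub_ne_zero.mpr fun h ↦ by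
    have hlt : ‖q ^ (i + 1)‖ < 1 := by
      rw [norm_pow]
      exact pow_lt_one₀ (norm_nonneg q) hq i.succ_ne_zero
    simp [← h] at hlt
  rw [partitionGenFun, tsum_partitionFun_mul_pow hq, ← hinv.tprod_mul (multipliable_one_sub_pow hq)]
  simp only [inv_mul_cancel₀ (hne _), tprod_one]

theorem tendsto_partitionGenFun_nhds_zero : Tendsto partitionGenFun (𝓝 0) (𝓝 1) := by
  have hball : Metric.ball (0 : ℂ) 1 ∈ 𝓝 0 := Metric.ball_mem_nhds 0 one_pos
  have hprod : Tendsto (fun q : ℂ ↦ ∏' i : ℕ, (1 - q ^ (i + 1))) (𝓝 0) (𝓝 1) := by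
    simpa using (differentiableOn_tprod_one_sub_pow.differentiableAt hball).continuousAt.tendsto
  have hinv := hprod.inv₀ one_ne_zero
  rw [inv_one] at hinv
  refine hinv.congr' ?_
  filter_upwards [hball] with q hq
  exact (eq_inv_of_mul_eq_one_left
    (partitionGenFun_mul_tprod_one_sub_pow (mem_ball_zero_iff.mp hq))).symm

theorem eta_mul_partitionGenFun {τ : ℂ} (hτ : 0 < τ.im) :
    η τ * partitionGenFun (exp (2 * π * I * τ)) = exp (2 * π * I * τ / 24) := by
  have hq : ‖exp (2 * π * I * τ)‖ < 1 := UpperHalfPlane.norm_exp_two_pi_I_lt_one ⟨τ, hτ⟩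
  have hP := partitionGenFun_mul_tprod_one_sub_pow hq
  simp only [ModularForm.eta, eta_q_eq_pow]
  rw [mul_assoc, mul_comm (∏' _, _), hP, mul_one, Function.Periodic.qParam, ofReal_ofNat]

theorem eta_I_mul_mul_partitionGenFun {w : ℂ} (hw : 0 < w.re) :
    η (I * w) * partitionGenFun (exp (-(2 * π * w))) = exp (-(π * w / 12)) := by
  have hnome : 2 * π * I * (I * w) = -(2 * π * w) := by linear_combination 2 * π * w * I_mul_I
  have h := eta_mul_partitionGenFun (τ := I * w) (by simpa using hw)
  rw [hnome] at h
  rw [h]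
  ring_nf

theorem csqrt_mul {a b : ℂ} (ha : a ≠ 0) (hb : b ≠ 0) (harg : arg a + arg b ∈ Ioc (-π) π) :
    sqrt (a * b) = sqrt a * sqrt b := by
  simp only [sqrt, cpow_def_of_ne_zero, ne_eq, mul_eq_zero, ha, hb, or_self, not_false_eq_true,
    log_mul ha hb harg, add_mul, exp_add]

theorem eta_I_mul_inv {w : ℂ} (hw : 0 < w.re) : η (I * w⁻¹) = sqrt w * η (I * w) := by
  have hw0 : w ≠ 0 := fun h ↦ by simp [h] at hw
  have harg : arg I + arg w ∈ Ioc (-π) π := by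
    have := abs_lt.mp (abs_arg_lt_pi_div_two_iff.mpr (.inl hw))
    rw [arg_I]
    constructor <;> linarith [Real.pi_pos]
  have hτ : I * w ∈ UpperHalfPlane.upperHalfPlaneSet := by
    simpa [UpperHalfPlane.upperHalfPlaneSet] using hw
  have hinv : -1 / (I * w) = I * w⁻¹ := by
    field_simp
    simp
  have hsqrtI : sqrt I ≠ 0 := by simp [sqrt]
  have hS := eta_comp_eq_csqrt_I_inv hτ
  simp only [Function.comp_apply, Pi.smul_apply, Pi.mul_apply, smul_eq_mul, hinv,
    csqrt_mul I_ne_zero hw0 harg] at hS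
  rw [hS, mul_assoc, inv_mul_cancel_left₀ hsqrtI]

theorem partitionGenFun_exp_neg_mul_sqrt_mul_exp {z : ℂ} (hz : 0 < z.re) :
    partitionGenFun (exp (-z)) * sqrt (2 * π / z) * exp (-π ^ 2 / (6 * z)) =
      exp (-z / 24) * partitionGenFun (exp (-(4 * π ^ 2) / z)) := by
  have hpi : (π : ℂ) ≠ 0 := by exact_mod_cast Real.pi_ne_zero
  have hz0 : z ≠ 0 := fun h ↦ by simp [h] at hz
  obtain ⟨w, rfl⟩ : ∃ w, z = 2 * π * w := ⟨z / (2 * π), by field_simp⟩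
  have hw : 0 < w.re := by
    rw [← ofReal_ofNat, ← ofReal_mul, re_ofReal_mul] at hz
    exact pos_of_mul_pos_right hz (by positivity)
  have hw0 : w ≠ 0 := right_ne_zero_of_mul hz0
  have hsqrt : sqrt w ≠ 0 := by simpa [sqrt, cpow_eq_zero_iff] using hw0
  have hsqrt_inv : sqrt (2 * π / (2 * π * w)) = (sqrt w)⁻¹ := by
    rw [div_mul_cancel_left₀ (by simp), sqrt,
      inv_cpow _ _ (slitPlane_arg_ne_pi (.inl hw)), sqrt]
  have hinv : 0 < w⁻¹.re := by
    rw [inv_re]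
    exact div_pos hw (normSq_pos.mpr hw0)
  have hP := eta_I_mul_mul_partitionGenFun hw
  have hP' := eta_I_mul_mul_partitionGenFun hinv
  rw [eta_I_mul_inv hw] at hP'
  rw [hsqrt_inv,
    show -π ^ 2 / (6 * (2 * π * w)) = -(π * w⁻¹ / 12) by field_simp; norm_num,
    show -(2 * π * w) / 24 = -(π * w / 12) by ring,
    show -(4 * π ^ 2) / (2 * π * w) = -(2 * π * w⁻¹) by field_simp; norm_num, ← hP, ← hP']
  field_simp

end Modularity

section Asymptotics

open Complex

theorem tendsto_exp_neg_div_of_tendsto_re_inv {l : Filter ℂ} {c : ℝ} (hc : 0 < c)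
    (hre : Tendsto (fun z : ℂ ↦ z⁻¹.re) l atTop) :
    Tendsto (fun z : ℂ ↦ exp (-c / z)) l (𝓝 0) := by
  refine tendsto_exp_comap_re_atBot.comp (tendsto_comap_iff.mpr ?_)
  refine (tendsto_neg_atTop_atBot.comp (hre.const_mul_atTop hc)).congr fun z ↦ ?_
  simp [div_eq_mul_inv, ← ofReal_neg]

theorem le_nhds_zero_of_tendsto_re_inv {l : Filter ℂ}
    (hre : Tendsto (fun z : ℂ ↦ z⁻¹.re) l atTop) : l ≤ 𝓝 0 := by
  have hnorm : Tendsto (fun z : ℂ ↦ ‖z⁻¹‖) l atTop :=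
    tendsto_atTop_mono (fun z ↦ re_le_norm z⁻¹) hre
  simpa [Function.comp_def, Tendsto] using
    tendsto_inv₀_cobounded.comp (tendsto_norm_atTop_iff_cobounded.mp hnorm)

theorem tendsto_re_inv_sector_atTop (Δ : ℝ) :
    Tendsto (fun z : ℂ ↦ z⁻¹.re) (𝓝[{z : ℂ | 0 < z.re ∧ |z.im| ≤ Δ * z.re}] 0) atTop := by
  have hre : Tendsto (fun z : ℂ ↦ z.re)
      (𝓝[{z : ℂ | 0 < z.re ∧ |z.im| ≤ Δ * z.re}] 0) (𝓝[>] 0) :=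
    tendsto_nhdsWithin_iff.mpr ⟨(continuous_re.tendsto' 0 0 rfl).mono_left nhdsWithin_le_nhds,
      eventually_nhdsWithin_of_forall fun z hz ↦ hz.1⟩
  refine tendsto_atTop_mono' _ ?_
    ((tendsto_inv_nhdsGT_zero.comp hre).const_mul_atTop (r := (1 + Δ ^ 2)⁻¹) (by positivity))
  filter_upwards [self_mem_nhdsWithin] with z ⟨hz, hzim⟩
  have him : z.im ^ 2 ≤ Δ ^ 2 * z.re ^ 2 := by
    rw [← mul_pow, ← sq_abs z.im]
    gcongr
  have hnormSq : 0 < normSq z := normSq_pos.mpr fun h ↦ by simp [h] at hz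
  rw [Function.comp_apply, inv_re, ← mul_inv, inv_eq_one_div,
    div_le_div_iff₀ (by positivity) hnormSq, normSq_apply]
  nlinarith only [him]

theorem partition_generating_function_asymptotic_general {l : Filter ℂ}
    (hre : Tendsto (fun z : ℂ ↦ z⁻¹.re) l atTop) :
    Tendsto (fun z : ℂ ↦
        (∑' n : ℕ, (partitionFun n : ℂ) * Complex.exp (-z * (n : ℂ))) *
          (2 * (Real.pi : ℂ) / z) ^ ((1 : ℂ) / 2) *
          Complex.exp (-(Real.pi : ℂ) ^ 2 / (6 * z)))
      l (𝓝 1) := by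
  have hnome := tendsto_exp_neg_div_of_tendsto_re_inv (c := 4 * Real.pi ^ 2) (by positivity) hre
  simp only [ofReal_mul, ofReal_pow, ofReal_ofNat] at hnome
  have hexp : Tendsto (fun z : ℂ ↦ exp (-z / 24)) l (𝓝 1) :=
    ((by fun_prop : Continuous fun z : ℂ ↦ exp (-z / 24)).tendsto' 0 1 (by simp)).mono_left
      (le_nhds_zero_of_tendsto_re_inv hre)
  have hlim := hexp.mul (tendsto_partitionGenFun_nhds_zero.comp hnome)
  simp only [mul_one, Function.comp_apply] at hlim
  refine hlim.congr' ?_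
  filter_upwards [hre.eventually_gt_atTop 0] with z hz
  have hz_re : 0 < z.re := by
    rw [inv_re] at hz
    exact (div_pos_iff_of_pos_right (normSq_pos.mpr fun h ↦ by simp [h] at hz)).mp hz
  rw [← partitionGenFun_exp_neg_mul_sqrt_mul_exp hz_re, partitionGenFun, sqrt, one_div]
  simp only [← exp_nat_mul, mul_comm (-z)]

/-- In any region `{z = x+iy : x > 0, |y| ≤ Δ x}`, the partition generating function
satisfies `P(e^{-z}) ~ √(z/(2π)) e^{π²/(6z)}` as `z → 0`; equivalently
`P(e^{-z}) √(2π/z) e^{-π²/(6z)} → 1`. -/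
theorem partition_generating_function_asymptotic (Δ : ℝ) (hΔ : 0 < Δ) :
    Tendsto (fun z : ℂ =>
        (∑' n : ℕ, (partitionFun n : ℂ) * Complex.exp (-z * (n : ℂ))) *
          (2 * (Real.pi : ℂ) / z) ^ ((1 : ℂ) / 2) *
          Complex.exp (-(Real.pi : ℂ) ^ 2 / (6 * z)))
      (𝓝[{z : ℂ | 0 < z.re ∧ |z.im| ≤ Δ * z.re}] 0) (𝓝 1) :=
  partition_generating_function_asymptotic_general (tendsto_re_inv_sector_atTop Δ)

end Asymptotics

end
end
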